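/- Let G be a finite simple graph on n ≥ 3 vertices. There exists a feasible agency without parking in G with k = n agents and some time horizon T if and only if the spanning subgraph of G whose edge set consists of all edges of G that are contained in some 2-factor of G is connected. -/

import Mathlib

open SimpleGraph

/-- A walk with parking of time horizon `T` that visits every vertex and returns
to its starting vertex: a (traveling salesman) tour. -/
def AgencyTour {V : Type*} (G : SimpleGraph V) (T : ℕ) (a : ℕ → V) : Prop :=
  (∀ t < T, a t = a (t + 1) ∨ G.Adj (a t) (a (t + 1))) ∧
  (∀ v : V, ∃ t ≤ T, a t = v) ∧
  a 0 = a T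

/-- A feasible agency with `k` agents and time horizon `T`: each agent performs a
tour (with parking), and no two distinct agents crash in a node or in an edge. -/
def FeasibleAgency {V : Type*} (G : SimpleGraph V) (k T : ℕ) (a : Fin k → ℕ → V) : Prop :=
  (∀ i, AgencyTour G T (a i)) ∧
  ∀ i j : Fin k, i ≠ j →
    (∀ t ≤ T, a i t ≠ a j t) ∧
    (∀ t < T, ¬(a i t = a j (t + 1) ∧ a i (t + 1) = a j t ∧ a i t ≠ a i (t + 1)))

/-- A walk without parking of time horizon `T` that visits every vertex and returns
to its starting vertex: a tour without parking. -/
def AgencyTourNP {V : Type*} (G : SimpleGraph V) (T : ℕ) (a : ℕ → V) : Prop :=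
  (∀ t < T, G.Adj (a t) (a (t + 1))) ∧
  (∀ v : V, ∃ t ≤ T, a t = v) ∧
  a 0 = a T

/-- A feasible agency without parking with `k` agents and time horizon `T`. -/
def FeasibleAgencyNP {V : Type*} (G : SimpleGraph V) (k T : ℕ) (a : Fin k → ℕ → V) : Prop :=
  (∀ i, AgencyTourNP G T (a i)) ∧
  ∀ i j : Fin k, i ≠ j →
    (∀ t ≤ T, a i t ≠ a j t) ∧
    (∀ t < T, ¬(a i t = a j (t + 1) ∧ a i (t + 1) = a j t ∧ a i t ≠ a i (t + 1)))

/-- A 2-factor of `G`: a spanning subgraph (given as a simple graph `H ≤ G`) in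
which every vertex has degree exactly 2. -/
def IsTwoFactor {V : Type*} (G H : SimpleGraph V) : Prop :=
  H ≤ G ∧ ∀ v : V, (H.neighborSet v).ncard = 2


/-- Every 2-regular graph has a consistent orientation, given by a permutation. -/
lemma exists_orientation {V : Type*} (H : SimpleGraph V)
    (hH : ∀ v : V, (H.neighborSet v).ncard = 2) :
    ∃ σ : Equiv.Perm V, (∀ v, H.Adj v (σ v)) ∧ (∀ v, σ (σ v) ≠ v) := by
  classical
  have key : ∀ u v, ∃ w, H.Adj u v → (H.Adj v w ∧ w ≠ u ∧ ∀ x, H.Adj v x → x = u ∨ x = w) := by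
    intro u v
    by_cases h : H.Adj u v
    · obtain ⟨x, y, hxy, hs⟩ := Set.ncard_eq_two.1 (hH v)
      have hm : ∀ z, H.Adj v z ↔ z = x ∨ z = y := by
        intro z
        have : z ∈ H.neighborSet v ↔ z ∈ ({x, y} : Set V) := by rw [hs]
        simpa using this
      have hu := (hm u).1 h.symm
      rcases hu with rfl | rfl
      · exact ⟨y, fun _ => ⟨(hm y).2 (Or.inr rfl), hxy.symm, fun z hz => (hm z).1 hz⟩⟩
      · exact ⟨x, fun _ => ⟨(hm x).2 (Or.inl rfl), hxy, fun z hz => ((hm z).1 hz).symm⟩⟩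
    · exact ⟨u, fun h' => absurd h' h⟩
  choose o ho using key
  have hoo : ∀ u v, H.Adj u v → o (o u v) v = u := by
    intro u v h
    obtain ⟨h1, h2, h3⟩ := ho u v h
    obtain ⟨k1, k2, k3⟩ := ho (o u v) v h1.symm
    rcases h3 _ k1 with h | h
    · exact h
    · exact absurd h k2
  let f : Equiv.Perm H.Dart :=
    { toFun := fun d => ⟨(d.snd, o d.fst d.snd), (ho _ _ d.adj).1⟩
      invFun := fun d => ⟨(o d.snd d.fst, d.fst), (ho _ _ d.adj.symm).1.symm⟩
      left_inv := by
        intro d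
        apply SimpleGraph.Dart.ext
        exact Prod.ext (hoo _ _ d.adj) rfl
      right_inv := by
        intro d
        apply SimpleGraph.Dart.ext
        exact Prod.ext rfl (hoo _ _ d.adj.symm) }
  let r : Equiv.Perm H.Dart :=
    ⟨fun d => d.symm, fun d => d.symm, fun d => d.symm_symm, fun d => d.symm_symm⟩
  have hrf : r * f * r⁻¹ = f⁻¹ := by
    ext d <;> rfl
  have hrfz : ∀ (k : ℤ) d, r ((f ^ k) d) = (f ^ (-k)) (r d) := by
    intro k d
    have : r * f ^ k * r⁻¹ = f ^ (-k) := by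
      rw [← conj_zpow, hrf, inv_zpow, zpow_neg]
    rw [← this]
    simp
  have hr1 : ∀ d, r d ≠ d := fun d h => d.symm_ne h
  have hr2 : ∀ d, f d ≠ r d := by
    intro d h
    have : o d.fst d.snd = d.fst := congrArg (fun e : H.Dart => e.snd) h
    exact (ho _ _ d.adj).2.1 this
  have hne : ∀ d, ¬ f.SameCycle d (r d) := by
    rintro d ⟨k, hk⟩
    obtain ⟨j, hj | hj⟩ := Int.even_or_odd' k
    · apply hr1 ((f ^ j) d)
      rw [hrfz, ← hk, ← Equiv.Perm.mul_apply, ← zpow_add, hj]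
      congr 2; ring
    · apply hr2 ((f ^ j) d)
      rw [hrfz, ← hk, ← Equiv.Perm.mul_apply, ← Equiv.Perm.mul_apply, ← zpow_add, ← zpow_one_add, hj]
      congr 2; ring
  let Q := Quotient (Equiv.Perm.SameCycle.setoid f)
  let c : H.Dart → Q := fun d => Quotient.mk _ d
  let _ : LinearOrder Q := linearOrderOfSTO (WellOrderingRel : Q → Q → Prop)
  have hc : ∀ d d', c d = c d' ↔ f.SameCycle d d' := fun d d' => Quotient.eq
  have hc1 : ∀ d, c (f d) = c d := by
    intro d; rw [hc]; exact ⟨-1, by simp⟩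
  have hc2 : ∀ d, c (r (f d)) = c (r d) := by
    intro d; rw [hc]
    have := hrfz 1 d
    rw [zpow_one] at this
    rw [this]; exact ⟨1, by simp⟩
  let S : V → V → Prop := fun u v => ∃ h : H.Adj u v, c ⟨(u, v), h⟩ < c (r ⟨(u, v), h⟩)
  have hS1 : ∀ u v, S u v → ¬ S v u := by
    rintro u v ⟨h, h'⟩ ⟨k, k'⟩
    exact lt_asymm h' k'
  have hS2 : ∀ u v, H.Adj u v → ¬ S u v → S v u := by
    intro u v h hn
    refine ⟨h.symm, ?_⟩
    have h1 : ¬ c ⟨(u, v), h⟩ < c (r ⟨(u, v), h⟩) := fun h' => hn ⟨h, h'⟩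
    have h2 : c ⟨(u, v), h⟩ ≠ c (r ⟨(u, v), h⟩) := fun h' => hne _ ((hc _ _).1 h')
    exact lt_of_le_of_ne (not_lt.1 h1) h2.symm
  have hS3 : ∀ u v, S u v → S v (o u v) := by
    rintro u v ⟨h, h'⟩
    refine ⟨(ho _ _ h).1, ?_⟩
    have e1 := hc1 ⟨(u, v), h⟩
    have e2 := hc2 ⟨(u, v), h⟩
    rw [← e1, ← e2] at h'
    exact h'
  have hadj : ∀ u v, S u v → H.Adj u v := fun u v h => h.1
  have hex : ∀ v, ∃ w, S v w := by
    intro v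
    obtain ⟨x, y, hxy, hs⟩ := Set.ncard_eq_two.1 (hH v)
    have hx : H.Adj v x := by
      have : x ∈ H.neighborSet v := by rw [hs]; simp
      exact this
    by_cases h : S v x
    · exact ⟨x, h⟩
    · exact ⟨_, hS3 _ _ (hS2 _ _ hx h)⟩
  choose s hs using hex
  have inj : Function.Injective s := by
    intro u u' h
    by_contra hne
    have h1 := hs u
    have h2 := hs u'
    rw [← h] at h2
    have h3 := hS3 _ _ h1
    rcases (ho _ _ (hadj _ _ h1)).2.2 u' (hadj _ _ h2).symm with h4 | h4
    · exact hne h4.symm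
    · rw [← h4] at h3
      exact hS1 _ _ h3 h2
  have surj : Function.Surjective s := by
    intro v
    obtain ⟨x, y, hxy, hs'⟩ := Set.ncard_eq_two.1 (hH v)
    have hx : H.Adj v x := by
      have : x ∈ H.neighborSet v := by rw [hs']; simp
      exact this
    have uniq : ∀ u, S u v → s u = v := by
      intro u hu
      by_contra hne
      have h1 := hs u
      by_cases h2 : S v u
      · exact hS1 _ _ h2 hu
      have h3 := (ho v u (hadj _ _ hu).symm).2.2 _ (hadj _ _ h1)
      rcases h3 with h3 | h3
      · exact hne h3
      · -- the dart into `u` from `s u` is followed by the dart from `u` to `v`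
        have h4 := (ho (s u) u (hadj _ _ h1).symm)
        have h5 : ¬ S (s u) u := hS1 _ _ h1
        have h6 : ¬ S v u := h2
        have e1 := hc1 ⟨(v, u), (hadj _ _ hu).symm⟩
        have e2 := hc2 ⟨(v, u), (hadj _ _ hu).symm⟩
        obtain ⟨k, hk⟩ := h1
        obtain ⟨l, hl⟩ := hu
        have e3 : f ⟨(v, u), l.symm⟩ = ⟨(u, s u), k⟩ := by
          apply SimpleGraph.Dart.ext
          exact Prod.ext rfl h3.symm
        rw [e3] at e1 e2
        rw [e1, e2] at hk
        exact lt_asymm hk hl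
    by_cases h : S x v
    · exact ⟨x, uniq _ h⟩
    · have h1 : S v x := hS2 _ _ hx.symm h
      -- the other neighbour
      have h2 := ho x v hx.symm
      refine ⟨o x v, uniq _ ?_⟩
      by_contra h3
      have h4 := hS2 _ _ h2.1.symm h3
      obtain ⟨k, hk⟩ := h4
      have e1 := hc1 ⟨(x, v), hx.symm⟩
      have e2 := hc2 ⟨(x, v), hx.symm⟩
      apply h
      refine ⟨hx.symm, ?_⟩
      rw [← e1, ← e2]
      exact hk
  refine ⟨Equiv.ofBijective s ⟨inj, surj⟩, fun v => hadj _ _ (hs v), fun v h => ?_⟩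
  have h1 := hs (s v)
  have h2 : s (s v) = v := h
  rw [h2] at h1
  exact hS1 _ _ h1 (hs v)

/-- The moves: permutations along edges without swaps. -/
def GoodMove {V : Type*} (G : SimpleGraph V) (σ : Equiv.Perm V) : Prop :=
  (∀ v, G.Adj v (σ v)) ∧ (∀ v, σ (σ v) ≠ v)

lemma GoodMove.inv {V : Type*} {G : SimpleGraph V} {σ : Equiv.Perm V} (h : GoodMove G σ) :
    GoodMove G σ⁻¹ := by
  refine ⟨fun v => ?_, fun v hv => ?_⟩
  · have := h.1 (σ⁻¹ v)
    simpa using this.symm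
  · apply h.2 v
    have h1 := congrArg (fun x => σ (σ x)) hv
    simpa using h1.symm

lemma GoodMove.twoFactor {V : Type*} {G : SimpleGraph V} {σ : Equiv.Perm V} (h : GoodMove G σ)
    (v : V) : ∃ H : SimpleGraph V, IsTwoFactor G H ∧ H.Adj v (σ v) := by
  refine ⟨⟨fun x y => σ x = y ∨ σ y = x, ?_, ?_⟩, ⟨?_, ?_⟩, ?_⟩
  · exact ⟨fun x y hxy => hxy.symm⟩
  · refine ⟨fun x hx => ?_⟩
    have : σ x = x := by simpa using hx
    exact (h.1 x).ne this.symm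
  · rintro x y (rfl | rfl)
    · exact h.1 _
    · exact (h.1 _).symm
  · intro x
    rw [Set.ncard_eq_two]
    refine ⟨σ x, σ⁻¹ x, fun e => ?_, ?_⟩
    · apply h.2 x
      rw [e]; simp
    · ext y
      simp only [mem_neighborSet, Set.mem_insert_iff, Set.mem_singleton_iff,
        Equiv.Perm.eq_inv_iff_eq]
      exact or_congr eq_comm Iff.rfl
  · exact Or.inl rfl

lemma exists_goodMove {V : Type*} [Finite V] {G H : SimpleGraph V} (hH : IsTwoFactor G H)
    {u v : V} (huv : H.Adj u v) : ∃ σ, GoodMove G σ ∧ σ u = v := by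
  obtain ⟨σ, h1, h2⟩ := exists_orientation H hH.2
  have hg : GoodMove G σ := ⟨fun v => hH.1 (h1 v), h2⟩
  have hne : σ u ≠ σ⁻¹ u := fun e => h2 u (by rw [e]; simp)
  have hsub : ({σ u, σ⁻¹ u} : Set V) = H.neighborSet u := by
    apply Set.eq_of_subset_of_ncard_le
    · rintro y (rfl | rfl)
      · exact h1 u
      · have := h1 (σ⁻¹ u)
        simpa using this.symm
    · rw [hH.2, Set.ncard_pair hne]
    · exact Set.toFinite _
  have : v ∈ ({σ u, σ⁻¹ u} : Set V) := by rw [hsub]; exact huv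
  rcases this with h | h
  · exact ⟨σ, hg, h.symm⟩
  · exact ⟨σ⁻¹, hg.inv, h.symm⟩

/-- The Cayley graph of the moves. -/
def moveGraph {V : Type*} [Nonempty V] (G : SimpleGraph V) : SimpleGraph (Equiv.Perm V) where
  Adj g h := GoodMove G (h * g⁻¹)
  symm := ⟨fun g h hgh => by simpa using hgh.inv⟩
  loopless := ⟨fun g hg => by
    obtain ⟨v⟩ := ‹Nonempty V›
    exact hg.2 v (by simp)⟩

lemma exists_closed_walk {W : Type*} (C : SimpleGraph W) (x : W) (P : Finset W) :
    (∀ g ∈ P, C.Reachable x g) → ∃ w : C.Walk x x, ∀ g ∈ P, g ∈ w.support := by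
  classical
  induction P using Finset.induction_on with
  | empty => intro _; exact ⟨Walk.nil, by simp⟩
  | insert a s ha ih =>
    intro h
    obtain ⟨w, hw⟩ := ih fun g hg => h g (Finset.mem_insert_of_mem hg)
    obtain ⟨q⟩ := h a (Finset.mem_insert_self _ _)
    refine ⟨w.append (q.append q.reverse), fun g hg => ?_⟩
    rw [Walk.mem_support_append_iff, Walk.mem_support_append_iff]
    rcases Finset.mem_insert.1 hg with rfl | hg
    · exact Or.inr (Or.inl q.end_mem_support)
    · exact Or.inl (hw g hg)

/-- a graph on `n ≥ 3` vertices admits a feasible agency without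
parking with `k = n` agents and some time horizon `T` iff the spanning subgraph
whose edges are the edges of `G` lying in some 2-factor of `G` is connected. -/
theorem stmt11 {V : Type*} [Fintype V] (G : SimpleGraph V)
    (hn : 3 ≤ Fintype.card V) :
    (∃ T : ℕ, ∃ a : Fin (Fintype.card V) → ℕ → V,
        FeasibleAgencyNP G (Fintype.card V) T a) ↔
      (SimpleGraph.fromEdgeSet
        {e : Sym2 V | ∃ H : SimpleGraph V, IsTwoFactor G H ∧ e ∈ H.edgeSet}).Connected := by
  classical
  have hne : Nonempty V := Fintype.card_pos_iff.1 (by omega)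
  constructor
  · rintro ⟨T, a, ha1, ha2⟩
    have hbij : ∀ t ≤ T, Function.Bijective (fun i => a i t) := by
      intro t ht
      rw [Fintype.bijective_iff_injective_and_card]
      refine ⟨fun i j hij => ?_, by simp⟩
      by_contra hne
      exact (ha2 i j hne).1 t ht hij
    have hstep : ∀ t < T, ∀ i, ∃ H : SimpleGraph V, IsTwoFactor G H ∧
        H.Adj (a i t) (a i (t + 1)) := by
      intro t ht i
      let p := Equiv.ofBijective _ (hbij t ht.le)
      let q := Equiv.ofBijective _ (hbij (t + 1) ht)
      let σ : Equiv.Perm V := p.symm.trans q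
      have hσ : ∀ j, σ (a j t) = a j (t + 1) := by
        intro j
        have : p.symm (a j t) = j := p.symm_apply_apply j
        change q (p.symm (a j t)) = _
        rw [this]; rfl
      have hg : GoodMove G σ := by
        refine ⟨fun v => ?_, fun v hv => ?_⟩
        · obtain ⟨j, rfl⟩ := (hbij t ht.le).2 v
          change G.Adj (a j t) (σ (a j t))
          rw [hσ]
          exact (ha1 j).1 t ht
        · obtain ⟨j, rfl⟩ := (hbij t ht.le).2 v
          change σ (σ (a j t)) = a j t at hv
          rw [hσ] at hv
          obtain ⟨l, hl⟩ := (hbij t ht.le).2 (a j (t + 1))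
          change a l t = _ at hl
          rw [← hl, hσ] at hv
          have hadj := (ha1 j).1 t ht
          have hjl : j ≠ l := by
            rintro rfl
            exact hadj.ne hl
          exact (ha2 j l hjl).2 t ht ⟨hv.symm, hl.symm, hadj.ne⟩
      obtain ⟨H, h1, h2⟩ := hg.twoFactor (a i t)
      rw [hσ] at h2
      exact ⟨H, h1, h2⟩
    let i0 : Fin (Fintype.card V) := ⟨0, by omega⟩
    set K := SimpleGraph.fromEdgeSet
        {e : Sym2 V | ∃ H : SimpleGraph V, IsTwoFactor G H ∧ e ∈ H.edgeSet} with hK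
    have hreach : ∀ t ≤ T, K.Reachable (a i0 0) (a i0 t) := by
      intro t
      induction t with
      | zero => intro _; exact Reachable.refl _
      | succ t ih =>
        intro ht
        refine (ih (by omega)).trans (Adj.reachable ?_)
        obtain ⟨H, h1, h2⟩ := hstep t ht i0
        rw [hK, fromEdgeSet_adj]
        exact ⟨⟨H, h1, h2⟩, h2.ne⟩
    have hall : ∀ v, K.Reachable (a i0 0) v := by
      intro v
      obtain ⟨t, ht, rfl⟩ := (ha1 i0).2.1 v
      exact hreach t ht
    exact (connected_iff _).2 ⟨fun u v => (hall u).symm.trans (hall v), hne⟩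
  · intro hconn
    have htrans : ∀ u v : V, ∃ g, (moveGraph G).Reachable 1 g ∧ g u = v := by
      intro u v
      have aux : ∀ x y, (SimpleGraph.fromEdgeSet
        {e : Sym2 V | ∃ H : SimpleGraph V, IsTwoFactor G H ∧ e ∈ H.edgeSet}).Walk x y →
          (∃ g, (moveGraph G).Reachable 1 g ∧ g u = x) →
          ∃ g, (moveGraph G).Reachable 1 g ∧ g u = y := by
        intro x y w
        induction w with
        | nil => exact id
        | cons h p ih =>
          rintro ⟨g, hg1, hg2⟩
          apply ih
          rw [fromEdgeSet_adj] at h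
          obtain ⟨⟨H, h1, h2⟩, -⟩ := h
          obtain ⟨σ, h3, h4⟩ := exists_goodMove h1 h2
          refine ⟨σ * g, hg1.trans (Adj.reachable ?_), ?_⟩
          · change GoodMove G (σ * g * g⁻¹)
            simpa using h3
          · simp [hg2, h4]
      obtain ⟨w⟩ := hconn.preconnected u v
      exact aux u v w ⟨1, Reachable.refl _, rfl⟩
    obtain ⟨w, hw⟩ := exists_closed_walk (moveGraph G) 1
      (Finset.univ.filter fun g => (moveGraph G).Reachable 1 g) (by simp)
    let e : Fin (Fintype.card V) ≃ V := (Fintype.equivFin V).symm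
    have hmove : ∀ t < w.length, GoodMove G (w.getVert (t + 1) * (w.getVert t)⁻¹) :=
      fun t ht => w.adj_getVert_succ ht
    refine ⟨w.length, fun i t => w.getVert t (e i), ?_, ?_⟩
    · intro i
      refine ⟨fun t ht => ?_, fun v => ?_, ?_⟩
      · have := (hmove t ht).1 (w.getVert t (e i))
        simpa using this
      · obtain ⟨g, hg1, hg2⟩ := htrans (e i) v
        have hm := hw g (by simpa using hg1)
        rw [Walk.mem_support_iff_exists_getVert] at hm
        obtain ⟨t, ht1, ht2⟩ := hm
        exact ⟨t, ht2, by rw [← hg2, ← ht1]⟩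
      · simp
    · intro i j hij
      refine ⟨fun t ht h => hij ?_, ?_⟩
      · exact e.injective ((w.getVert t).injective h)
      · rintro t ht ⟨h1, h2, h3⟩
        apply (hmove t ht).2 (w.getVert t (e i))
        have h4 : (w.getVert (t + 1) * (w.getVert t)⁻¹) (w.getVert t (e i))
            = w.getVert (t + 1) (e i) := by simp
        rw [h4]
        change w.getVert t (e i) = w.getVert (t + 1) (e j) at h1
        change w.getVert (t + 1) (e i) = w.getVert t (e j) at h2
        rw [h2, h1]
        simp
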